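/- Talagrand's influence inequality: There exists a universal constant c > 0 such that for every p ∈ (0,1), every n ∈ ℕ, and every increasing boolean function f : {0,1}^n → {0,1}, one has Var_p(f) ≤ c · log(1/(p(1−p))) · Σ_{i=1}^n Inf_i[f] / log(1/Inf_i[f]), where a summand with Inf_i[f] = 0 is interpreted as 0 and a summand with Inf_i[f] = 1 is interpreted as +∞. -/

import Mathlib

open scoped Classical

section BooleanAnalysis

variable {ι : Type*} [Fintype ι] [DecidableEq ι]

/-- The Bernoulli(`p`) product weight of a configuration `ω ∈ {0,1}^ι`:
`∏ i, p^{ω i}(1-p)^{1-ω i}`.  Summing a function against these weights gives its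
expectation under the product measure `ℙ_p`. -/
noncomputable def bernoulliWeight (p : ℝ) (ω : ι → Bool) : ℝ :=
  ∏ i : ι, if ω i then p else 1 - p

/-- Expectation `𝔼_p[g]` of `g : {0,1}^ι → ℝ` under the product Bernoulli(`p`) measure. -/
noncomputable def bernoulliExp (p : ℝ) (g : (ι → Bool) → ℝ) : ℝ :=
  ∑ ω : ι → Bool, bernoulliWeight p ω * g ω

/-- The `{0,1}`-valued (real) indicator of a boolean function. -/
noncomputable def boolInd (f : (ι → Bool) → Bool) (ω : ι → Bool) : ℝ :=
  if f ω then 1 else 0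

/-- `f(p) := 𝔼_p[f]` for a boolean function `f`. -/
noncomputable def bernoulliMean (p : ℝ) (f : (ι → Bool) → Bool) : ℝ :=
  bernoulliExp p (boolInd f)

/-- The variance `Var_p(f)` of a boolean function under `ℙ_p`. -/
noncomputable def bernoulliVar (p : ℝ) (f : (ι → Bool) → Bool) : ℝ :=
  bernoulliExp p (fun ω => (boolInd f ω - bernoulliMean p f) ^ 2)

/-- `Flip_i(ω)`: flip the `i`-th coordinate of `ω`. -/
def flipCoord (i : ι) (ω : ι → Bool) : ι → Bool :=
  Function.update ω i (!ω i)

/-- The influence `Inf_i[f] := 𝔼_p[|f(ω) - f(Flip_i ω)|]` of coordinate `i`, under `ℙ_p`. -/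
noncomputable def influence (p : ℝ) (f : (ι → Bool) → Bool) (i : ι) : ℝ :=
  bernoulliExp p (fun ω => |boolInd f ω - boolInd f (flipCoord i ω)|)

/-- A boolean function is increasing if it is monotone w.r.t. the coordinatewise
partial order on `{0,1}^ι` (with `false ≤ true`). -/
def IncreasingBoolFun (f : (ι → Bool) → Bool) : Prop :=
  ∀ ω ω' : ι → Bool, (∀ i, ω i ≤ ω' i) → f ω ≤ f ω'

end BooleanAnalysis

/-!
Expand in the orthonormal Walsh basis of the biased cube. By Parseval the variance of `F` splits
into coordinate shares `∑ S, ĝ(S)² / |S|`, where `g` is the Laplacian of `F` in that coordinate.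
Levels `|S| ≥ t` contribute at most `𝔼[g²] / t` to a share; lower levels are dominated by a noise
stability of `g`, which hypercontractivity bounds by `𝔼[|g|]^(3/2)` when `|g| ≤ 1`. The choice of
`t` proportional to `log (1 / 𝔼[|g|]) / log (1 / (p (1 - p)))` balances the two contributions.
-/

section RealInequalities

-- The term linear in `x` is kept because it averages out when `x` is a centered variable.
lemma add_mul_pow_four_le {x : ℝ} (hx : |x| ≤ 1 / 2) (g h : ℝ) :
    (g + x * h) ^ 4 ≤ (g ^ 2 + h ^ 2) ^ 2 + 4 * (g ^ 3 * h * x) := by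
  have hx2 : x ^ 2 ≤ 1 / 4 := by
    have := pow_le_pow_left₀ (abs_nonneg x) hx 2
    rw [sq_abs] at this
    linarith
  have hx4 : x ^ 4 ≤ 1 / 4 := by nlinarith [sq_nonneg x]
  have hmixed : 0 ≤ 2 * h ^ 2 * x ^ 2 * (g - x * h) ^ 2 := by positivity
  have hsquare : 0 ≤ g ^ 2 * h ^ 2 * (2 - 8 * x ^ 2) := mul_nonneg (by positivity) (by linarith)
  have hquartic : 0 ≤ h ^ 4 * (1 - 3 * x ^ 4) := mul_nonneg (by positivity) (by linarith)
  linear_combination hmixed + hsquare + hquartic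

lemma sq_le_abs_of_abs_le_one {x : ℝ} (hx : |x| ≤ 1) : x ^ 2 ≤ |x| := by
  rw [← sq_abs]
  exact pow_le_of_le_one (abs_nonneg x) hx two_ne_zero

lemma one_div_natCast_le_rpow_add {r t : ℝ} (hr₀ : 0 < r) (hr₁ : r ≤ 1) (ht : 0 < t) (k : ℕ) :
    1 / (k : ℝ) ≤ r ^ ((k : ℝ) - t) + 1 / t := by
  rcases le_or_gt (k : ℝ) t with hkt | htk
  · have hone : 1 ≤ r ^ ((k : ℝ) - t) :=
      Real.one_le_rpow_of_pos_of_le_one_of_nonpos hr₀ hr₁ (by linarith)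
    have hk : 1 / (k : ℝ) ≤ 1 := by simpa using Nat.cast_inv_le_one k
    have : 0 < 1 / t := one_div_pos.2 ht
    linarith
  · have hk : 1 / (k : ℝ) ≤ 1 / t := one_div_le_one_div_of_le ht htk.le
    have : 0 < r ^ ((k : ℝ) - t) := Real.rpow_pos_of_pos hr₀ _
    linarith

lemma exp_neg_le_one_div {x : ℝ} (hx : 0 < x) : Real.exp (-x) ≤ 1 / x := by
  rw [Real.exp_neg, one_div]
  exact inv_anti₀ hx (by linarith [Real.add_one_le_exp x])

lemma mul_one_sub_le_quarter (p : ℝ) : p * (1 - p) ≤ 1 / 4 := by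
  linarith [sq_nonneg (p - 1 / 2)]

end RealInequalities

section BernoulliExpectation

variable {ι : Type*} [Fintype ι]

lemma bernoulliWeight_nonneg {p : ℝ} (hp : p ∈ Set.Icc (0 : ℝ) 1) (ω : ι → Bool) :
    0 ≤ bernoulliWeight p ω :=
  Finset.prod_nonneg fun i _ => by split_ifs <;> linarith [hp.1, hp.2]

variable [DecidableEq ι]

lemma bernoulliExp_mono {p : ℝ} (hp : p ∈ Set.Icc (0 : ℝ) 1) {F G : (ι → Bool) → ℝ}
    (h : ∀ ω, F ω ≤ G ω) : bernoulliExp p F ≤ bernoulliExp p G :=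
  Finset.sum_le_sum fun ω _ => mul_le_mul_of_nonneg_left (h ω) (bernoulliWeight_nonneg hp ω)

lemma bernoulliExp_nonneg {p : ℝ} (hp : p ∈ Set.Icc (0 : ℝ) 1) {F : (ι → Bool) → ℝ}
    (h : ∀ ω, 0 ≤ F ω) : 0 ≤ bernoulliExp p F :=
  Finset.sum_nonneg fun ω _ => mul_nonneg (bernoulliWeight_nonneg hp ω) (h ω)

lemma bernoulliExp_add (p : ℝ) (F G : (ι → Bool) → ℝ) :
    bernoulliExp p (fun ω => F ω + G ω) = bernoulliExp p F + bernoulliExp p G := by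
  simp only [bernoulliExp, mul_add, Finset.sum_add_distrib]

lemma bernoulliExp_sub (p : ℝ) (F G : (ι → Bool) → ℝ) :
    bernoulliExp p (fun ω => F ω - G ω) = bernoulliExp p F - bernoulliExp p G := by
  simp only [bernoulliExp, mul_sub, Finset.sum_sub_distrib]

lemma bernoulliExp_const_mul (p c : ℝ) (F : (ι → Bool) → ℝ) :
    bernoulliExp p (fun ω => c * F ω) = c * bernoulliExp p F := by
  simp only [bernoulliExp, Finset.mul_sum, mul_left_comm]

lemma bernoulliExp_sum {α : Type*} (p : ℝ) (s : Finset α) (F : α → (ι → Bool) → ℝ) :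
    bernoulliExp p (fun ω => ∑ a ∈ s, F a ω) = ∑ a ∈ s, bernoulliExp p (F a) := by
  simp only [bernoulliExp, Finset.mul_sum]
  exact Finset.sum_comm

lemma bernoulliExp_const (p c : ℝ) : bernoulliExp p (fun _ : ι → Bool => c) = c := by
  have htotal : ∑ ω : ι → Bool, bernoulliWeight p ω = 1 := by
    have := Fintype.prod_sum fun (_ : ι) (b : Bool) => if b then p else 1 - p
    simpa [bernoulliWeight] using this.symm
  rw [bernoulliExp, ← Finset.sum_mul, htotal, one_mul]

lemma bernoulliExp_sub_mean_sq (p : ℝ) (F : (ι → Bool) → ℝ) :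
    bernoulliExp p (fun ω => (F ω - bernoulliExp p F) ^ 2) =
      bernoulliExp p (fun ω => F ω ^ 2) - bernoulliExp p F ^ 2 := by
  set m := bernoulliExp p F with hm
  have hexpand : ∀ ω, (F ω - m) ^ 2 = F ω ^ 2 - (2 * m) * F ω + m ^ 2 := fun ω => by ring
  simp only [hexpand]
  rw [bernoulliExp_add, bernoulliExp_sub, bernoulliExp_const_mul, bernoulliExp_const, ← hm]
  ring

lemma bernoulliExp_sq_le_mul_of_sq_le_mul {p : ℝ} (hp : p ∈ Set.Icc (0 : ℝ) 1)
    {F G H : (ι → Bool) → ℝ} (hG : ∀ ω, 0 ≤ G ω) (hH : ∀ ω, 0 ≤ H ω)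
    (hF : ∀ ω, F ω ^ 2 ≤ G ω * H ω) :
    bernoulliExp p F ^ 2 ≤ bernoulliExp p G * bernoulliExp p H := by
  refine Finset.sum_sq_le_sum_mul_sum_of_sq_le_mul _
    (fun ω _ => mul_nonneg (bernoulliWeight_nonneg hp ω) (hG ω))
    (fun ω _ => mul_nonneg (bernoulliWeight_nonneg hp ω) (hH ω)) fun ω _ => ?_
  rw [mul_pow, mul_mul_mul_comm, ← sq]
  exact mul_le_mul_of_nonneg_left (hF ω) (sq_nonneg _)

lemma bernoulliExp_sq_le_bernoulliExp_abs {p : ℝ} (hp : p ∈ Set.Icc (0 : ℝ) 1)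
    {g : (ι → Bool) → ℝ} (hg : ∀ ω, |g ω| ≤ 1) :
    bernoulliExp p (fun ω => g ω ^ 2) ≤ bernoulliExp p (fun ω => |g ω|) :=
  bernoulliExp_mono hp fun ω => sq_le_abs_of_abs_le_one (hg ω)

lemma bernoulliExp_mul_pow_four_le {p : ℝ} (hp : p ∈ Set.Icc (0 : ℝ) 1) {g : (ι → Bool) → ℝ}
    (hg : ∀ ω, |g ω| ≤ 1) (u : (ι → Bool) → ℝ) :
    bernoulliExp p (fun ω => g ω * u ω) ^ 4 ≤
      bernoulliExp p (fun ω => |g ω|) ^ 3 * bernoulliExp p (fun ω => u ω ^ 4) := by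
  set J := bernoulliExp p (fun ω => |g ω|)
  set M := bernoulliExp p (fun ω => |g ω| * u ω ^ 2)
  have hfirst : bernoulliExp p (fun ω => g ω * u ω) ^ 2 ≤ J * M :=
    bernoulliExp_sq_le_mul_of_sq_le_mul hp (fun ω => abs_nonneg _) (fun ω => by positivity)
      fun ω => by rw [mul_pow, ← mul_assoc, abs_mul_abs_self, ← sq]
  have hsecond : M ^ 2 ≤ J * bernoulliExp p (fun ω => u ω ^ 4) := by
    refine bernoulliExp_sq_le_mul_of_sq_le_mul hp (fun ω => abs_nonneg _)
      (fun ω => by positivity) fun ω => ?_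
    rw [mul_pow, sq_abs, show (u ω ^ 2) ^ 2 = u ω ^ 4 by ring]
    exact mul_le_mul_of_nonneg_right (sq_le_abs_of_abs_le_one (hg ω)) (by positivity)
  calc bernoulliExp p (fun ω => g ω * u ω) ^ 4
      = (bernoulliExp p (fun ω => g ω * u ω) ^ 2) ^ 2 := by ring
    _ ≤ (J * M) ^ 2 := pow_le_pow_left₀ (sq_nonneg _) hfirst 2
    _ = J ^ 2 * M ^ 2 := by ring
    _ ≤ J ^ 2 * (J * bernoulliExp p (fun ω => u ω ^ 4)) := by gcongr
    _ = J ^ 3 * bernoulliExp p (fun ω => u ω ^ 4) := by ring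

lemma bernoulliExp_sq_add_sq_sq_le {p : ℝ} (hp : p ∈ Set.Icc (0 : ℝ) 1)
    {g h : (ι → Bool) → ℝ} {a b : ℝ} (ha : 0 ≤ a) (hb : 0 ≤ b)
    (hg : bernoulliExp p (fun ω => g ω ^ 4) ≤ a ^ 2)
    (hh : bernoulliExp p (fun ω => h ω ^ 4) ≤ b ^ 2) :
    bernoulliExp p (fun ω => (g ω ^ 2 + h ω ^ 2) ^ 2) ≤ (a + b) ^ 2 := by
  have hcross : bernoulliExp p (fun ω => g ω ^ 2 * h ω ^ 2) ≤ a * b := by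
    refine le_of_sq_le_sq ?_ (mul_nonneg ha hb)
    calc bernoulliExp p (fun ω => g ω ^ 2 * h ω ^ 2) ^ 2
        ≤ bernoulliExp p (fun ω => g ω ^ 4) * bernoulliExp p (fun ω => h ω ^ 4) :=
          bernoulliExp_sq_le_mul_of_sq_le_mul hp (fun ω => by positivity)
            (fun ω => by positivity) fun ω => le_of_eq (by ring)
      _ ≤ a ^ 2 * b ^ 2 :=
          mul_le_mul hg hh (bernoulliExp_nonneg hp fun ω => by positivity) (sq_nonneg a)
      _ = (a * b) ^ 2 := by ring
  have hexpand : ∀ ω, (g ω ^ 2 + h ω ^ 2) ^ 2 =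
      g ω ^ 4 + 2 * (g ω ^ 2 * h ω ^ 2) + h ω ^ 4 := fun ω => by ring
  simp only [hexpand]
  rw [bernoulliExp_add, bernoulliExp_add, bernoulliExp_const_mul]
  linarith

end BernoulliExpectation

section CoordinateAverage

/-- The Bernoulli(`p`) mass of a single coordinate value. -/
noncomputable def coordWeight (p : ℝ) (b : Bool) : ℝ := if b then p else 1 - p

lemma coordWeight_add_not (p : ℝ) (b : Bool) : coordWeight p b + coordWeight p (!b) = 1 := by
  cases b <;> simp [coordWeight]

lemma coordWeight_mem_Icc {p : ℝ} (hp : p ∈ Set.Icc (0 : ℝ) 1) (b : Bool) :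
    coordWeight p b ∈ Set.Icc (0 : ℝ) 1 := by
  cases b
  · simpa [coordWeight] using hp.symm
  · simpa [coordWeight] using hp

variable {ι : Type*} [DecidableEq ι]

lemma flipCoord_flipCoord (i : ι) (ω : ι → Bool) : flipCoord i (flipCoord i ω) = ω := by
  simp [flipCoord]

lemma flipCoord_self (i : ι) (ω : ι → Bool) : flipCoord i ω i = !ω i := by
  simp [flipCoord]

lemma flipCoord_of_ne {i j : ι} (h : j ≠ i) (ω : ι → Bool) : flipCoord i ω j = ω j := by
  simp [flipCoord, h]

/-- The average `E_i F` of `F` over an independent resampling of coordinate `i`. -/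
noncomputable def coordAverage (p : ℝ) (i : ι) (F : (ι → Bool) → ℝ) (ω : ι → Bool) : ℝ :=
  coordWeight p (ω i) * F ω + coordWeight p (!ω i) * F (flipCoord i ω)

lemma coordAverage_flipCoord (p : ℝ) (i : ι) (F : (ι → Bool) → ℝ) (ω : ι → Bool) :
    coordAverage p i F (flipCoord i ω) = coordAverage p i F ω := by
  simp only [coordAverage, flipCoord_self, flipCoord_flipCoord, Bool.not_not]
  ring

lemma coordAverage_mul {G : (ι → Bool) → ℝ} {i : ι} (hG : ∀ ω, G (flipCoord i ω) = G ω)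
    (p : ℝ) (F : (ι → Bool) → ℝ) (ω : ι → Bool) :
    coordAverage p i (fun ω => F ω * G ω) ω = coordAverage p i F ω * G ω := by
  simp only [coordAverage, hG]
  ring

/-- The coordinate Laplacian `F - E_i F`, the part of `F` that depends on coordinate `i`. -/
noncomputable def coordLaplacian (p : ℝ) (i : ι) (F : (ι → Bool) → ℝ) (ω : ι → Bool) : ℝ :=
  F ω - coordAverage p i F ω

lemma coordLaplacian_eq_mul (p : ℝ) (i : ι) (F : (ι → Bool) → ℝ) (ω : ι → Bool) :
    coordLaplacian p i F ω = coordWeight p (!ω i) * (F ω - F (flipCoord i ω)) := by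
  rw [coordLaplacian, coordAverage]
  linear_combination -F ω * coordWeight_add_not p (ω i)

lemma abs_coordLaplacian_le {p : ℝ} (hp : p ∈ Set.Icc (0 : ℝ) 1) (i : ι)
    (F : (ι → Bool) → ℝ) (ω : ι → Bool) :
    |coordLaplacian p i F ω| ≤ |F ω - F (flipCoord i ω)| := by
  have hw := coordWeight_mem_Icc hp (!ω i)
  rw [coordLaplacian_eq_mul, abs_mul, abs_of_nonneg hw.1]
  exact mul_le_of_le_one_left (abs_nonneg _) hw.2

variable [Fintype ι]

lemma sum_comp_flipCoord (i : ι) (F : (ι → Bool) → ℝ) :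
    ∑ ω, F (flipCoord i ω) = ∑ ω, F ω :=
  Equiv.sum_comp (Function.Involutive.toPerm (flipCoord i) (flipCoord_flipCoord i)) F

lemma bernoulliWeight_flipCoord_mul (p : ℝ) (i : ι) (ω : ι → Bool) :
    bernoulliWeight p (flipCoord i ω) * coordWeight p (ω i) =
      bernoulliWeight p ω * coordWeight p (!ω i) := by
  have hsplit : ∀ η : ι → Bool, bernoulliWeight p η =
      coordWeight p (η i) * ∏ j ∈ Finset.univ.erase i, coordWeight p (η j) := fun η =>
    (Finset.mul_prod_erase _ (fun j => coordWeight p (η j)) (Finset.mem_univ i)).symm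
  have hrest : ∏ j ∈ Finset.univ.erase i, coordWeight p (flipCoord i ω j) =
      ∏ j ∈ Finset.univ.erase i, coordWeight p (ω j) :=
    Finset.prod_congr rfl fun j hj => by rw [flipCoord_of_ne (Finset.ne_of_mem_erase hj)]
  rw [hsplit ω, hsplit (flipCoord i ω), hrest, flipCoord_self]
  ring

lemma bernoulliExp_coordAverage (p : ℝ) (i : ι) (F : (ι → Bool) → ℝ) :
    bernoulliExp p (coordAverage p i F) = bernoulliExp p F := by
  have hswap : bernoulliExp p (fun ω => coordWeight p (!ω i) * F (flipCoord i ω)) =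
      bernoulliExp p (fun ω => coordWeight p (!ω i) * F ω) := by
    unfold bernoulliExp
    rw [← sum_comp_flipCoord i fun ω => bernoulliWeight p ω * (coordWeight p (!ω i) * F ω)]
    refine Finset.sum_congr rfl fun ω _ => ?_
    rw [flipCoord_self, Bool.not_not, ← mul_assoc, ← mul_assoc, bernoulliWeight_flipCoord_mul]
  unfold coordAverage
  rw [bernoulliExp_add, hswap, ← bernoulliExp_add]
  simp only [← add_mul, coordWeight_add_not, one_mul]

end CoordinateAverage

section WalshExpansion

/-- The standardized value of a Bernoulli(`p`) coordinate, with mean `0` and variance `1`. -/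
noncomputable def coordChar (p : ℝ) (b : Bool) : ℝ :=
  (if b then 1 - p else -p) / √(p * (1 - p))

lemma coordWeight_mul_coordChar_add_not (p : ℝ) (b : Bool) :
    coordWeight p b * coordChar p b + coordWeight p (!b) * coordChar p (!b) = 0 := by
  cases b <;> simp only [coordWeight, coordChar, Bool.not_false, Bool.not_true, if_true,
    if_false, reduceCtorEq] <;> ring

lemma coordWeight_mul_one_add_coordChar_mul {p : ℝ} (hp : p ∈ Set.Ioo (0 : ℝ) 1)
    (b b' : Bool) :
    coordWeight p b * (1 + coordChar p b * coordChar p b') = if b = b' then 1 else 0 := by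
  have hp₀ : p ≠ 0 := hp.1.ne'
  have hq₀ : 1 - p ≠ 0 := (sub_pos.2 hp.2).ne'
  have hsq : √(p * (1 - p)) * √(p * (1 - p)) = p * (1 - p) :=
    Real.mul_self_sqrt (mul_pos hp.1 (sub_pos.2 hp.2)).le
  rw [coordChar, coordChar, div_mul_div_comm, hsq]
  cases b <;> cases b' <;> simp only [coordWeight, if_true, if_false, reduceCtorEq] <;>
    field_simp <;> ring

lemma abs_mul_coordChar_le_half {p ρ : ℝ} (hp : p ∈ Set.Ioo (0 : ℝ) 1)
    (hρ : |ρ| ≤ √(p * (1 - p)) / 2) (b : Bool) : |ρ * coordChar p b| ≤ 1 / 2 := by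
  have hσ : 0 < √(p * (1 - p)) := Real.sqrt_pos.2 (mul_pos hp.1 (sub_pos.2 hp.2))
  have hnum : |if b then 1 - p else -p| ≤ 1 := by
    split_ifs <;> exact abs_le.2 ⟨by linarith [hp.1, hp.2], by linarith [hp.1, hp.2]⟩
  rw [coordChar, abs_mul, abs_div, abs_of_pos hσ, mul_div_assoc', div_le_iff₀ hσ]
  calc |ρ| * |if b then 1 - p else -p| ≤ |ρ| := mul_le_of_le_one_right (abs_nonneg ρ) hnum
    _ ≤ 1 / 2 * √(p * (1 - p)) := by linarith

variable {ι : Type*}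

/-- The biased Walsh functions, an orthonormal basis of `L²(ℙ_p)`. -/
noncomputable def walsh (p : ℝ) (S : Finset ι) (ω : ι → Bool) : ℝ := ∏ i ∈ S, coordChar p (ω i)

lemma bernoulliWeight_mul_sum_walsh_mul_walsh [Fintype ι] {p : ℝ}
    (hp : p ∈ Set.Ioo (0 : ℝ) 1) (ω η : ι → Bool) :
    bernoulliWeight p ω * ∑ S, walsh p S ω * walsh p S η = if ω = η then 1 else 0 := by
  have hproduct : ∑ S, walsh p S ω * walsh p S η =
      ∏ i, (1 + coordChar p (ω i) * coordChar p (η i)) := by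
    rw [Finset.prod_one_add, Finset.powerset_univ]
    simp only [Finset.prod_mul_distrib, walsh]
  calc bernoulliWeight p ω * ∑ S, walsh p S ω * walsh p S η
      = ∏ i, coordWeight p (ω i) * (1 + coordChar p (ω i) * coordChar p (η i)) := by
        rw [hproduct, Finset.prod_mul_distrib]
        rfl
    _ = if ω = η then 1 else 0 := by
        simp only [coordWeight_mul_one_add_coordChar_mul hp, Finset.prod_ite_zero,
          Finset.prod_const_one, Finset.mem_univ, true_implies, funext_iff]

variable [DecidableEq ι]

lemma walsh_flipCoord {i : ι} {S : Finset ι} (hi : i ∉ S) (p : ℝ) (ω : ι → Bool) :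
    walsh p S (flipCoord i ω) = walsh p S ω :=
  Finset.prod_congr rfl fun j hj => by rw [flipCoord_of_ne (ne_of_mem_of_not_mem hj hi)]

lemma walsh_insert {i : ι} {S : Finset ι} (hi : i ∉ S) (p : ℝ) (ω : ι → Bool) :
    walsh p (insert i S) ω = coordChar p (ω i) * walsh p S ω :=
  Finset.prod_insert hi

variable [Fintype ι]

lemma bernoulliExp_mul_coordChar_eq_zero {G : (ι → Bool) → ℝ} {i : ι}
    (hG : ∀ ω, G (flipCoord i ω) = G ω) (p : ℝ) :
    bernoulliExp p (fun ω => G ω * coordChar p (ω i)) = 0 := by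
  have haverage : ∀ ω, coordAverage p i (fun ω => G ω * coordChar p (ω i)) ω = 0 := fun ω => by
    rw [coordAverage, hG, flipCoord_self]
    linear_combination G ω * coordWeight_mul_coordChar_add_not p (ω i)
  rw [← bernoulliExp_coordAverage p i, funext haverage, bernoulliExp_const]

/-- The Walsh–Fourier coefficient `F̂(S) = 𝔼_p[F χ_S]`. -/
noncomputable def walshCoeff (p : ℝ) (F : (ι → Bool) → ℝ) (S : Finset ι) : ℝ :=
  bernoulliExp p (fun ω => F ω * walsh p S ω)

lemma walshCoeff_empty (p : ℝ) (F : (ι → Bool) → ℝ) : walshCoeff p F ∅ = bernoulliExp p F := by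
  simp only [walshCoeff, walsh, Finset.prod_empty, mul_one]

lemma walshCoeff_eq_zero_of_mem {G : (ι → Bool) → ℝ} {i : ι}
    (hG : ∀ ω, G (flipCoord i ω) = G ω) (p : ℝ) {S : Finset ι} (hi : i ∈ S) :
    walshCoeff p G S = 0 := by
  have hiS : i ∉ S.erase i := Finset.notMem_erase i S
  have hzero : bernoulliExp p (fun ω => G ω * walsh p (S.erase i) ω * coordChar p (ω i)) = 0 :=
    bernoulliExp_mul_coordChar_eq_zero (G := fun ω => G ω * walsh p (S.erase i) ω)
      (fun ω => by rw [hG, walsh_flipCoord hiS]) p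
  rw [walshCoeff, ← hzero]
  congr 1
  funext ω
  rw [← Finset.insert_erase hi, walsh_insert hiS, Finset.erase_insert hiS]
  ring

lemma walshCoeff_coordLaplacian (p : ℝ) (i : ι) (F : (ι → Bool) → ℝ) (S : Finset ι) :
    walshCoeff p (coordLaplacian p i F) S = if i ∈ S then walshCoeff p F S else 0 := by
  have hsub : walshCoeff p (coordLaplacian p i F) S =
      walshCoeff p F S - walshCoeff p (coordAverage p i F) S := by
    simp only [walshCoeff, coordLaplacian, sub_mul, bernoulliExp_sub]
  rw [hsub]
  split_ifs with hi
  · rw [walshCoeff_eq_zero_of_mem (coordAverage_flipCoord p i F) p hi, sub_zero]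
  · have haverage : walshCoeff p (coordAverage p i F) S = walshCoeff p F S := by
      rw [walshCoeff, walshCoeff, ← bernoulliExp_coordAverage p i fun ω => F ω * walsh p S ω,
        funext (coordAverage_mul (walsh_flipCoord hi p) p F)]
    rw [haverage, sub_self]

lemma sum_walshCoeff_mul_walsh {p : ℝ} (hp : p ∈ Set.Ioo (0 : ℝ) 1) (F : (ι → Bool) → ℝ)
    (η : ι → Bool) : ∑ S, walshCoeff p F S * walsh p S η = F η := by
  calc ∑ S, walshCoeff p F S * walsh p S η
      = ∑ S, ∑ ω, F ω * (bernoulliWeight p ω * (walsh p S ω * walsh p S η)) := by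
        refine Finset.sum_congr rfl fun S _ => ?_
        rw [walshCoeff, bernoulliExp, Finset.sum_mul]
        exact Finset.sum_congr rfl fun ω _ => by ring
    _ = ∑ ω, F ω * (bernoulliWeight p ω * ∑ S, walsh p S ω * walsh p S η) := by
        rw [Finset.sum_comm]
        simp only [Finset.mul_sum]
    _ = F η := by simp [bernoulliWeight_mul_sum_walsh_mul_walsh hp]

lemma bernoulliExp_mul_sum_walsh (p : ℝ) (F : (ι → Bool) → ℝ) (a : Finset ι → ℝ) :
    bernoulliExp p (fun ω => F ω * ∑ S, a S * walsh p S ω) = ∑ S, a S * walshCoeff p F S := by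
  simp only [Finset.mul_sum, mul_left_comm (F _)]
  simp only [bernoulliExp_sum, bernoulliExp_const_mul, walshCoeff]

lemma bernoulliExp_sq_eq_sum_walshCoeff_sq {p : ℝ} (hp : p ∈ Set.Ioo (0 : ℝ) 1)
    (F : (ι → Bool) → ℝ) :
    bernoulliExp p (fun ω => F ω ^ 2) = ∑ S, walshCoeff p F S ^ 2 := by
  have hpairing := bernoulliExp_mul_sum_walsh p F (walshCoeff p F)
  simpa only [sum_walshCoeff_mul_walsh hp, ← sq] using hpairing

end WalshExpansion

section Hypercontractivity

variable {ι : Type*} [DecidableEq ι]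

/-- The polynomial `∑ S ⊆ T, a_S χ_S` after applying the noise operator `T_ρ`, which multiplies
`χ_S` by `ρ ^ |S|`. Restricting to `S ⊆ T` allows induction on the set of variables. -/
noncomputable def noisyWalshSum (p ρ : ℝ) (a : Finset ι → ℝ) (T : Finset ι)
    (ω : ι → Bool) : ℝ :=
  ∑ S ∈ T.powerset, ρ ^ S.card * a S * walsh p S ω

lemma noisyWalshSum_flipCoord {i : ι} {T : Finset ι} (hi : i ∉ T) (p ρ : ℝ)
    (a : Finset ι → ℝ) (ω : ι → Bool) :
    noisyWalshSum p ρ a T (flipCoord i ω) = noisyWalshSum p ρ a T ω :=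
  Finset.sum_congr rfl fun S hS => by
    rw [walsh_flipCoord (Finset.notMem_of_mem_powerset_of_notMem hS hi)]

lemma noisyWalshSum_insert {i : ι} {T : Finset ι} (hi : i ∉ T) (p ρ : ℝ)
    (a : Finset ι → ℝ) (ω : ι → Bool) :
    noisyWalshSum p ρ a (insert i T) ω = noisyWalshSum p ρ a T ω +
      ρ * coordChar p (ω i) * noisyWalshSum p ρ (fun S => a (insert i S)) T ω := by
  simp only [noisyWalshSum, Finset.sum_powerset_insert hi, Finset.mul_sum]
  congr 1
  refine Finset.sum_congr rfl fun S hS => ?_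
  have hiS : i ∉ S := Finset.notMem_of_mem_powerset_of_notMem hS hi
  rw [walsh_insert hiS, Finset.card_insert_of_notMem hiS]
  ring

variable [Fintype ι]

lemma bernoulliExp_add_coordChar_mul_pow_four_le {p ρ : ℝ} (hp : p ∈ Set.Ioo (0 : ℝ) 1)
    (hρ : |ρ| ≤ √(p * (1 - p)) / 2) {i : ι} {g h : (ι → Bool) → ℝ}
    (hg : ∀ ω, g (flipCoord i ω) = g ω) (hh : ∀ ω, h (flipCoord i ω) = h ω) :
    bernoulliExp p (fun ω => (g ω + ρ * coordChar p (ω i) * h ω) ^ 4) ≤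
      bernoulliExp p (fun ω => (g ω ^ 2 + h ω ^ 2) ^ 2) := by
  have hlinear : bernoulliExp p (fun ω => (4 * ρ * (g ω ^ 3 * h ω)) * coordChar p (ω i)) = 0 :=
    bernoulliExp_mul_coordChar_eq_zero (fun ω => by rw [hg, hh]) p
  rw [← add_zero (bernoulliExp p fun ω => (g ω ^ 2 + h ω ^ 2) ^ 2), ← hlinear,
    ← bernoulliExp_add]
  refine bernoulliExp_mono (Set.Ioo_subset_Icc_self hp) fun ω => ?_
  linarith [add_mul_pow_four_le (abs_mul_coordChar_le_half hp hρ (ω i)) (g ω) (h ω)]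

theorem bernoulliExp_noisyWalshSum_pow_four_le {p ρ : ℝ} (hp : p ∈ Set.Ioo (0 : ℝ) 1)
    (hρ : |ρ| ≤ √(p * (1 - p)) / 2) (a : Finset ι → ℝ) (T : Finset ι) :
    bernoulliExp p (fun ω => noisyWalshSum p ρ a T ω ^ 4) ≤ (∑ S ∈ T.powerset, a S ^ 2) ^ 2 := by
  induction T using Finset.induction_on generalizing a with
  | empty =>
    simp only [noisyWalshSum, Finset.powerset_empty, Finset.sum_singleton, walsh,
      Finset.prod_empty, Finset.card_empty, pow_zero, one_mul, mul_one, bernoulliExp_const]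
    exact (pow_mul (a ∅) 2 2).le
  | insert i T hi ih =>
    simp only [noisyWalshSum_insert hi, Finset.sum_powerset_insert hi]
    exact (bernoulliExp_add_coordChar_mul_pow_four_le hp hρ
      (noisyWalshSum_flipCoord hi p ρ a) (noisyWalshSum_flipCoord hi p ρ _)).trans
      (bernoulliExp_sq_add_sq_sq_le (Set.Ioo_subset_Icc_self hp)
        (Finset.sum_nonneg fun _ _ => sq_nonneg _) (Finset.sum_nonneg fun _ _ => sq_nonneg _)
        (ih a) (ih fun S => a (insert i S)))

/-- The noise stability `Stab_r[g] = ∑ S, r ^ |S| ĝ(S)²`; for `r = ρ²` it is the squared `L²`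
norm of `T_ρ g`. -/
noncomputable def noiseStability (p r : ℝ) (g : (ι → Bool) → ℝ) : ℝ :=
  ∑ S, r ^ S.card * walshCoeff p g S ^ 2

theorem noiseStability_sq_le {p ρ : ℝ} (hp : p ∈ Set.Ioo (0 : ℝ) 1)
    (hρ : |ρ| ≤ √(p * (1 - p)) / 2) {g : (ι → Bool) → ℝ} (hg : ∀ ω, |g ω| ≤ 1) :
    noiseStability p (ρ ^ 2) g ^ 2 ≤ bernoulliExp p (fun ω => |g ω|) ^ 3 := by
  have hp' := Set.Ioo_subset_Icc_self hp
  set W := noiseStability p (ρ ^ 2) g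
  set J := bernoulliExp p (fun ω => |g ω|)
  -- Duality: pair `g` with `u = T_ρ (T_ρ g)` and apply hypercontractivity to `T_ρ g`.
  set a : Finset ι → ℝ := fun S => ρ ^ S.card * walshCoeff p g S with ha
  set u := noisyWalshSum p ρ a Finset.univ with hu
  have hnorm : ∑ S, a S ^ 2 = W :=
    Finset.sum_congr rfl fun S _ => by rw [ha]; ring
  have hpairing : bernoulliExp p (fun ω => g ω * u ω) = W := by
    simp only [hu, noisyWalshSum, Finset.powerset_univ]
    rw [bernoulliExp_mul_sum_walsh]
    exact Finset.sum_congr rfl fun S _ => by rw [ha]; ring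
  have hfourth : bernoulliExp p (fun ω => u ω ^ 4) ≤ W ^ 2 := by
    simpa only [Finset.powerset_univ, hnorm] using
      bernoulliExp_noisyWalshSum_pow_four_le hp hρ a Finset.univ
  have hJ₀ : 0 ≤ J := bernoulliExp_nonneg hp' fun ω => abs_nonneg _
  have hquartic : W ^ 2 * W ^ 2 ≤ J ^ 3 * W ^ 2 := by
    calc W ^ 2 * W ^ 2 = bernoulliExp p (fun ω => g ω * u ω) ^ 4 := by rw [hpairing]; ring
      _ ≤ J ^ 3 * bernoulliExp p (fun ω => u ω ^ 4) := bernoulliExp_mul_pow_four_le hp' hg u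
      _ ≤ J ^ 3 * W ^ 2 := by gcongr
  rcases (sq_nonneg W).eq_or_lt with hzero | hpos
  · rw [← hzero]
    positivity
  · exact le_of_mul_le_mul_right hquartic hpos

end Hypercontractivity

section InverseLevelEnergy

variable {ι : Type*} [Fintype ι] [DecidableEq ι]

/-- The energy `∑ S, ĝ(S)² / |S|`, in which level `|S|` is damped by its degree. The convention
`x / 0 = 0` discards the constant term `S = ∅`. -/
noncomputable def inverseLevelEnergy (p : ℝ) (g : (ι → Bool) → ℝ) : ℝ :=
  ∑ S, walshCoeff p g S ^ 2 / (S.card : ℝ)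

lemma inverseLevelEnergy_nonneg (p : ℝ) (g : (ι → Bool) → ℝ) : 0 ≤ inverseLevelEnergy p g :=
  Finset.sum_nonneg fun _ _ => by positivity

lemma inverseLevelEnergy_le_bernoulliExp_sq {p : ℝ} (hp : p ∈ Set.Ioo (0 : ℝ) 1)
    (g : (ι → Bool) → ℝ) : inverseLevelEnergy p g ≤ bernoulliExp p (fun ω => g ω ^ 2) := by
  rw [bernoulliExp_sq_eq_sum_walshCoeff_sq hp]
  refine Finset.sum_le_sum fun S _ => ?_
  rw [div_eq_mul_inv]
  exact mul_le_of_le_one_right (sq_nonneg _) (Nat.cast_inv_le_one _)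

lemma sum_walshCoeff_coordLaplacian_sq_div_card (p : ℝ) (F : (ι → Bool) → ℝ) (S : Finset ι) :
    ∑ i, walshCoeff p (coordLaplacian p i F) S ^ 2 / (S.card : ℝ) =
      if S = ∅ then 0 else walshCoeff p F S ^ 2 := by
  simp only [walshCoeff_coordLaplacian, ite_pow, ← Finset.sum_div]
  split_ifs with hS
  · simp [hS]
  · have hcard : (S.card : ℝ) ≠ 0 := by simpa using hS
    simp [Finset.sum_ite_mem, mul_div_cancel_left₀ _ hcard]

theorem bernoulliExp_sub_mean_sq_eq_sum_inverseLevelEnergy {p : ℝ}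
    (hp : p ∈ Set.Ioo (0 : ℝ) 1) (F : (ι → Bool) → ℝ) :
    bernoulliExp p (fun ω => (F ω - bernoulliExp p F) ^ 2) =
      ∑ i, inverseLevelEnergy p (coordLaplacian p i F) := by
  simp only [inverseLevelEnergy]
  rw [Finset.sum_comm]
  simp only [sum_walshCoeff_coordLaplacian_sq_div_card]
  calc bernoulliExp p (fun ω => (F ω - bernoulliExp p F) ^ 2)
      = ∑ S, walshCoeff p F S ^ 2 - walshCoeff p F ∅ ^ 2 := by
        rw [bernoulliExp_sub_mean_sq, bernoulliExp_sq_eq_sum_walshCoeff_sq hp, walshCoeff_empty]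
    _ = ∑ S ∈ Finset.univ.erase ∅, walshCoeff p F S ^ 2 :=
        (Finset.sum_erase_eq_sub (Finset.mem_univ ∅)).symm
    _ = ∑ S ∈ Finset.univ.erase ∅, if S = ∅ then 0 else walshCoeff p F S ^ 2 :=
        Finset.sum_congr rfl fun S hS => (if_neg (Finset.ne_of_mem_erase hS)).symm
    _ = ∑ S, if S = ∅ then 0 else walshCoeff p F S ^ 2 := Finset.sum_erase _ (if_pos rfl)

lemma inverseLevelEnergy_le_noiseStability_add {p r t : ℝ} (hp : p ∈ Set.Ioo (0 : ℝ) 1)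
    (hr₀ : 0 < r) (hr₁ : r ≤ 1) (ht : 0 < t) (g : (ι → Bool) → ℝ) :
    inverseLevelEnergy p g ≤
      r ^ (-t) * noiseStability p r g + 1 / t * bernoulliExp p (fun ω => g ω ^ 2) := by
  rw [bernoulliExp_sq_eq_sum_walshCoeff_sq hp, noiseStability, Finset.mul_sum, Finset.mul_sum,
    ← Finset.sum_add_distrib]
  refine Finset.sum_le_sum fun S _ => ?_
  have hcut := one_div_natCast_le_rpow_add hr₀ hr₁ ht S.card
  rw [sub_eq_neg_add, Real.rpow_add hr₀, Real.rpow_natCast] at hcut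
  calc walshCoeff p g S ^ 2 / (S.card : ℝ) = 1 / (S.card : ℝ) * walshCoeff p g S ^ 2 := by ring
    _ ≤ (r ^ (-t) * r ^ S.card + 1 / t) * walshCoeff p g S ^ 2 := by gcongr
    _ = _ := by ring

lemma one_le_log_one_div_mul_one_sub {p : ℝ} (hp : p ∈ Set.Ioo (0 : ℝ) 1) :
    1 ≤ Real.log (1 / (p * (1 - p))) := by
  have hpq : 0 < p * (1 - p) := mul_pos hp.1 (sub_pos.2 hp.2)
  rw [Real.le_log_iff_exp_le (one_div_pos.2 hpq), le_div_iff₀ hpq]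
  nlinarith [Real.exp_one_lt_three, mul_one_sub_le_quarter p]

lemma abs_mul_one_sub_le_sqrt_div_two {p : ℝ} (hp : p ∈ Set.Ioo (0 : ℝ) 1) :
    |p * (1 - p)| ≤ √(p * (1 - p)) / 2 := by
  have hpq : 0 < p * (1 - p) := mul_pos hp.1 (sub_pos.2 hp.2)
  have hhalf : √(p * (1 - p)) ≤ 1 / 2 :=
    Real.sqrt_le_iff.2 ⟨by norm_num, by linarith [mul_one_sub_le_quarter p]⟩
  rw [abs_of_pos hpq]
  nlinarith [Real.mul_self_sqrt hpq.le, Real.sqrt_nonneg (p * (1 - p))]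

lemma noiseStability_le_exp {p I : ℝ} (hp : p ∈ Set.Ioo (0 : ℝ) 1) {g : (ι → Bool) → ℝ}
    (hg : ∀ ω, |g ω| ≤ 1) (hgI : bernoulliExp p (fun ω => |g ω|) ≤ I) (hI : 0 < I) :
    noiseStability p ((p * (1 - p)) ^ 2) g ≤ Real.exp (-(3 / 2 * Real.log (1 / I))) := by
  refine le_of_sq_le_sq ?_ (Real.exp_pos _).le
  calc noiseStability p ((p * (1 - p)) ^ 2) g ^ 2 ≤ bernoulliExp p (fun ω => |g ω|) ^ 3 :=
        noiseStability_sq_le hp (abs_mul_one_sub_le_sqrt_div_two hp) hg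
    _ ≤ I ^ 3 := by
        gcongr
        exact bernoulliExp_nonneg (Set.Ioo_subset_Icc_self hp) fun ω => abs_nonneg _
    _ = Real.exp (-(3 / 2 * Real.log (1 / I))) ^ 2 := by
        rw [← Real.exp_nat_mul, one_div, Real.log_inv, ← Real.exp_log (pow_pos hI 3),
          Real.log_pow]
        congr 1
        push_cast
        ring

lemma exp_mul_noiseStability_le {p I : ℝ} (hp : p ∈ Set.Ioo (0 : ℝ) 1) {g : (ι → Bool) → ℝ}
    (hg : ∀ ω, |g ω| ≤ 1) (hgI : bernoulliExp p (fun ω => |g ω|) ≤ I)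
    (hI : I ∈ Set.Ioo (0 : ℝ) 1) :
    Real.exp (Real.log (1 / I) / 4) * noiseStability p ((p * (1 - p)) ^ 2) g ≤
      4 / Real.log (1 / I) * I := by
  have hstability := noiseStability_le_exp hp hg hgI hI.1
  have hexp : I = Real.exp (-Real.log (1 / I)) := by
    rw [one_div, Real.log_inv, neg_neg, Real.exp_log hI.1]
  have hΛ : 0 < Real.log (1 / I) := Real.log_pos (one_lt_one_div hI.1 hI.2)
  set Λ := Real.log (1 / I)
  calc Real.exp (Λ / 4) * noiseStability p ((p * (1 - p)) ^ 2) g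
      ≤ Real.exp (Λ / 4) * Real.exp (-(3 / 2 * Λ)) := by gcongr
    _ = Real.exp (-(Λ / 4)) * Real.exp (-Λ) := by
        rw [← Real.exp_add, ← Real.exp_add]
        ring_nf
    _ = Real.exp (-(Λ / 4)) * I := by rw [← hexp]
    _ ≤ 1 / (Λ / 4) * I :=
        mul_le_mul_of_nonneg_right (exp_neg_le_one_div (by positivity)) hI.1.le
    _ = 4 / Λ * I := by rw [one_div_div]

theorem inverseLevelEnergy_le_div_log {p I : ℝ} (hp : p ∈ Set.Ioo (0 : ℝ) 1)
    {g : (ι → Bool) → ℝ} (hg : ∀ ω, |g ω| ≤ 1)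
    (hgI : bernoulliExp p (fun ω => |g ω|) ≤ I) (hI : I ∈ Set.Ioo (0 : ℝ) 1) :
    inverseLevelEnergy p g ≤ 12 * Real.log (1 / (p * (1 - p))) * (I / Real.log (1 / I)) := by
  have hpq : 0 < p * (1 - p) := mul_pos hp.1 (sub_pos.2 hp.2)
  have hlow := exp_mul_noiseStability_le hp hg hgI hI
  have hsq : bernoulliExp p (fun ω => g ω ^ 2) ≤ I :=
    (bernoulliExp_sq_le_bernoulliExp_abs (Set.Ioo_subset_Icc_self hp) hg).trans hgI
  have hL := one_le_log_one_div_mul_one_sub hp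
  have hΛ : 0 < Real.log (1 / I) := Real.log_pos (one_lt_one_div hI.1 hI.2)
  set L := Real.log (1 / (p * (1 - p))) with hLdef
  set Λ := Real.log (1 / I)
  set t := Λ / (8 * L) with ht
  have hr : (p * (1 - p)) ^ 2 ≤ 1 :=
    pow_le_one₀ hpq.le ((mul_one_sub_le_quarter p).trans (by norm_num))
  have hrpow : ((p * (1 - p)) ^ 2) ^ (-t) = Real.exp (Λ / 4) := by
    have hlog : Real.log ((p * (1 - p)) ^ 2) = -(2 * L) := by
      rw [hLdef, one_div, Real.log_inv, Real.log_pow]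
      push_cast
      ring
    rw [Real.rpow_def_of_pos (pow_pos hpq 2), hlog, ht]
    congr 1
    field_simp
    norm_num
  calc inverseLevelEnergy p g
      ≤ Real.exp (Λ / 4) * noiseStability p ((p * (1 - p)) ^ 2) g +
          1 / t * bernoulliExp p (fun ω => g ω ^ 2) := by
        rw [← hrpow]
        exact inverseLevelEnergy_le_noiseStability_add hp (pow_pos hpq 2) hr (by positivity) g
    _ ≤ 4 / Λ * I + 1 / t * I := by gcongr
    _ = (4 + 8 * L) * (I / Λ) := by rw [ht]; field_simp
    _ ≤ 12 * L * (I / Λ) := mul_le_mul_of_nonneg_right (by linarith) (div_pos hI.1 hΛ).le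

theorem ofReal_inverseLevelEnergy_le {p I : ℝ} (hp : p ∈ Set.Ioo (0 : ℝ) 1)
    {g : (ι → Bool) → ℝ} (hg : ∀ ω, |g ω| ≤ 1)
    (hgI : bernoulliExp p (fun ω => |g ω|) ≤ I) :
    ENNReal.ofReal (inverseLevelEnergy p g) ≤
      ENNReal.ofReal (12 * Real.log (1 / (p * (1 - p)))) *
        (ENNReal.ofReal I / ENNReal.ofReal (Real.log (1 / I))) := by
  have hp' := Set.Ioo_subset_Icc_self hp
  have hL := one_le_log_one_div_mul_one_sub hp
  rcases le_or_gt I 0 with hI₀ | hI₀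
  · have hzero : inverseLevelEnergy p g ≤ 0 :=
      (inverseLevelEnergy_le_bernoulliExp_sq hp g).trans
        ((bernoulliExp_sq_le_bernoulliExp_abs hp' hg).trans (hgI.trans hI₀))
    rw [ENNReal.ofReal_of_nonpos hzero]
    exact zero_le
  rcases le_or_gt 1 I with hI₁ | hI₁
  · have hlog : Real.log (1 / I) ≤ 0 := by
      rw [one_div, Real.log_inv]
      exact neg_nonpos.2 (Real.log_nonneg hI₁)
    rw [ENNReal.ofReal_of_nonpos hlog, ENNReal.div_zero (ENNReal.ofReal_pos.2 hI₀).ne',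
      ENNReal.mul_top (ENNReal.ofReal_pos.2 (by linarith)).ne']
    exact le_top
  · have hlog : 0 < Real.log (1 / I) := Real.log_pos (one_lt_one_div hI₀ hI₁)
    rw [← ENNReal.ofReal_div_of_pos hlog, ← ENNReal.ofReal_mul (by linarith)]
    exact ENNReal.ofReal_le_ofReal (inverseLevelEnergy_le_div_log hp hg hgI ⟨hI₀, hI₁⟩)

end InverseLevelEnergy

theorem talagrand_influence_inequality_general {ι : Type*} [Fintype ι] [DecidableEq ι] {p : ℝ}
    (hp : p ∈ Set.Ioo (0 : ℝ) 1) {F : (ι → Bool) → ℝ}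
    (hF : ∀ i ω, |F ω - F (flipCoord i ω)| ≤ 1) :
    ENNReal.ofReal (bernoulliExp p (fun ω => (F ω - bernoulliExp p F) ^ 2)) ≤
      ENNReal.ofReal (12 * Real.log (1 / (p * (1 - p)))) *
        ∑ i, ENNReal.ofReal (bernoulliExp p (fun ω => |F ω - F (flipCoord i ω)|)) /
          ENNReal.ofReal
            (Real.log (1 / bernoulliExp p (fun ω => |F ω - F (flipCoord i ω)|))) := by
  have hlaplacian := abs_coordLaplacian_le (ι := ι) (Set.Ioo_subset_Icc_self hp)
  rw [bernoulliExp_sub_mean_sq_eq_sum_inverseLevelEnergy hp,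
    ENNReal.ofReal_sum_of_nonneg fun i _ => inverseLevelEnergy_nonneg p _, Finset.mul_sum]
  refine Finset.sum_le_sum fun i _ => ofReal_inverseLevelEnergy_le hp ?_ ?_
  · exact fun ω => (hlaplacian i F ω).trans (hF i ω)
  · exact bernoulliExp_mono (Set.Ioo_subset_Icc_self hp) (hlaplacian i F)

lemma abs_boolInd_sub_boolInd_le_one {ι : Type*} (f : (ι → Bool) → Bool) (ω η : ι → Bool) :
    |boolInd f ω - boolInd f η| ≤ 1 := by
  unfold boolInd
  split_ifs <;> norm_num

/-- **Talagrand's influence inequality.**  There is a universal constant `c > 0` such that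
for every `p ∈ (0,1)`, every `n`, and every increasing boolean function `f : {0,1}^n → {0,1}`,
`Var_p(f) ≤ c·log(1/(p(1−p)))·Σ_i Inf_i[f]/log(1/Inf_i[f])`.
The inequality is stated in `ℝ≥0∞`, where the summand for a coordinate with `Inf_i[f] = 0`
equals `0` (as `0/0 = 0` in `ℝ≥0∞`) and the summand for `Inf_i[f] = 1` equals `+∞`
(as `1/0 = ∞` in `ℝ≥0∞`, `log(1/1) = 0`). -/
theorem talagrand_influence_inequality :
    ∃ c : ℝ, 0 < c ∧ ∀ (p : ℝ), p ∈ Set.Ioo (0 : ℝ) 1 → ∀ (n : ℕ)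
      (f : (Fin n → Bool) → Bool), IncreasingBoolFun f →
      ENNReal.ofReal (bernoulliVar p f) ≤
        ENNReal.ofReal (c * Real.log (1 / (p * (1 - p)))) *
          ∑ i : Fin n,
            ENNReal.ofReal (influence p f i) /
              ENNReal.ofReal (Real.log (1 / influence p f i)) := by
  exact ⟨12, by norm_num, fun p hp n f _ =>
    talagrand_influence_inequality_general hp fun i ω =>
      abs_boolInd_sub_boolInd_le_one f ω (flipCoord i ω)⟩
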